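/- A \emph{plane st-digraph} is a finite acyclic digraph (parallel edges allowed) with at least one edge, with a single source and a single sink, embedded in the plane so that the source and the sink lie on the boundary of the outer face. Let $D$ be a plane st-digraph and let $v_K$ be a vertex of $D$. Expand $v_K$ into a quadrilateral inner face $f_K$ whose vertices $a,b,c,d$ appear in this clockwise order on its boundary: $v_K$ is replaced by the $4$-cycle $a,b,c,d$, and the edges incident to $v_K$, taken in their clockwise circular order around $v_K$ and cut into four consecutive (possibly empty) blocks, are reattached block by block to $a,b,c,d$, outside $f_K$ and in the same circular order; the rest of the embedding is unchanged. Suppose that, if $v_K$ is neither the source nor the sink of $D$, each of $a,b,c,d$ receives at least one edge. Then the four boundary edges of $f_K$ can be directed so that in the resulting digraph $D'$: (I1) there is a single source and a single sink; (I2) the face $f_K$ is bounded by two directed paths of length two from a common origin to a common destination, the origin and the destination being two opposite (non-adjacent) vertices of $f_K$; and $D'$ is a planarly embedded acyclic digraph with a single source and a single sink. Moreover, the directions can be chosen so that, in addition, $D'$ is again a plane st-digraph (its source and its sink lie on the boundary of the outer face) whenever each of $a,b,c,d$ receives at least one edge (in particular whenever $v_K$ is neither the source nor the sink of $D$), and also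 whenever some vertex of $f_K$ that lies on the boundary of the outer face is opposite in $f_K$ to a vertex that receives at least one edge. -/

import Mathlib

/-! Digraphs (parallel edges allowed) embedded in the plane, given combinatorially: by the clockwise
rotation of the edge-ends around every vertex, together with a choice of the outer face. -/

/-- The vertex at an edge-end: `(e, true)` is the tail end of the edge `e` (at its source, where `e`
is outgoing), and `(e, false)` is the head end of `e` (at its target, where `e` is incoming). -/
def endVertex {V E : Type*} (src tgt : E → V) (x : E × Bool) : V :=
  if x.2 then src x.1 else tgt x.1

/-- A digraph with vertex set `V` and edge set `E`, with an embedding given by a rotation system: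
`rot` sends an edge-end to the clockwise next edge-end at the same vertex, so that its cycles are
exactly the sets of edge-ends at a common vertex. The outer face is the face (a cycle of `faceNext`
below) that contains the edge-end `outer`. -/
structure EmbeddedDigraph (V E : Type*) where
  src : E → V
  tgt : E → V
  rot : Equiv.Perm (E × Bool)
  sameCycle_rot_iff : ∀ x y : E × Bool,
    rot.SameCycle x y ↔ endVertex src tgt x = endVertex src tgt y
  outer : E × Bool

namespace EmbeddedDigraph

variable {V E : Type*} (D : EmbeddedDigraph V E)

/-- The vertex at an edge-end. -/
def vert (x : E × Bool) : V := endVertex D.src D.tgt x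

/-- There is an edge from `u` to `w`. -/
def Adj (u w : V) : Prop := ∃ e : E, D.src e = u ∧ D.tgt e = w

def IsSource (u : V) : Prop := ∀ e : E, D.tgt e ≠ u

def IsSink (u : V) : Prop := ∀ e : E, D.src e ≠ u

/-- Acyclic, with a single source and a single sink. -/
def IsStGraph : Prop :=
  (∀ u : V, ¬ Relation.TransGen D.Adj u u) ∧ (∃! s : V, D.IsSource s) ∧ (∃! t : V, D.IsSink t)

/-- The other end of the same edge. -/
def flip : Equiv.Perm (E × Bool) := Equiv.prodCongr (Equiv.refl E) Equiv.boolNot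

/-- The boundary walk of a face, with the face on its left. The edge-end `x` stands for the edge of
`x` traversed starting from `x`; the walk goes to the other end of that edge, and then leaves along
the edge that comes clockwise next there. -/
def faceNext : Equiv.Perm (E × Bool) := flip.trans D.rot

/-- The faces are the cycles of `faceNext`. -/
def Face : Type _ := Quotient (Equiv.Perm.SameCycle.setoid D.faceNext)

/-- The embedding is an embedding in the plane (equivalently, in the sphere): the underlying
undirected graph is connected and Euler's formula `|V| - |E| + |F| = 2` holds. -/
def IsPlane : Prop :=
  (∀ u w : V, Relation.EqvGen D.Adj u w) ∧ Nat.card V + Nat.card D.Face = Nat.card E + 2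

/-- The vertex `u` lies on the boundary of the outer face. -/
def OnOuterFace (u : V) : Prop := ∃ x : E × Bool, D.faceNext.SameCycle D.outer x ∧ D.vert x = u

/-- A plane st-graph: a plane embedding of an st-graph with its source and its sink on the boundary
of the outer face. -/
def IsPlaneStGraph : Prop :=
  D.IsPlane ∧ D.IsStGraph ∧ ∀ u : V, D.IsSource u ∨ D.IsSink u → D.OnOuterFace u

/-- The list of edges `l` is a directed walk from `u` to `w`. -/
def IsDirectedWalk : V → List E → V → Prop
  | u, [], w => u = w
  | u, e :: l, w => D.src e = u ∧ IsDirectedWalk (D.tgt e) l w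

/-- There is a face whose boundary consists of the two directed paths `left` and `right` from the
origin `o` to the destination `t`: its boundary walk, with the face on the left, follows `right`
from `o` to `t` and then goes along `left` backwards from `t` to `o`. -/
def IsFaceBoundedBy (o t : V) (left right : List E) : Prop :=
  D.IsDirectedWalk o left t ∧ D.IsDirectedWalk o right t ∧
    (right.map (fun e => (e, true)) ++ left.reverse.map (fun e => (e, false))).Nodup ∧
    Cycle.Chain (fun x y => D.faceNext x = y)
      ((right.map (fun e => (e, true)) ++ left.reverse.map (fun e => (e, false)) :
        List (E × Bool)) : Cycle (E × Bool))

/-- A distribution of the edge-ends at the vertex `v` among four new vertices `0, 1, 2, 3`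
(that is, `a, b, c, d`) that respects the circular order around `v`: the edge-ends at `v`, listed
once each in clockwise order, are cut into four consecutive blocks (possibly empty). -/
structure Distribution (v : V) where
  block : Fin 4 → List (E × Bool)
  nodup : (block 0 ++ block 1 ++ block 2 ++ block 3).Nodup
  mem_iff : ∀ x : E × Bool, x ∈ block 0 ++ block 1 ++ block 2 ++ block 3 ↔ D.vert x = v
  clockwise : Cycle.Chain (fun x y => D.rot x = y)
    ((block 0 ++ block 1 ++ block 2 ++ block 3 : List (E × Bool)) : Cycle (E × Bool))

/-- An old edge-end, as an edge-end of the expanded digraph. -/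
def oldEnd (x : E × Bool) : (E ⊕ Fin 4) × Bool := (Sum.inl x.1, x.2)

/-- A permutation of the old edge-ends, extended by the identity. -/
def extendRot (σ : Equiv.Perm (E × Bool)) : Equiv.Perm ((E ⊕ Fin 4) × Bool) :=
  (Equiv.sumProdDistrib E (Fin 4) Bool).symm.permCongr (Equiv.sumCongr σ (Equiv.refl _))

/-- The permutation that acts as `π y` on the fibre of `p` over `y`. -/
def gluePerm {X Y : Type*} (p : X → Y) (π : Y → Equiv.Perm X)
    (h : ∀ x : X, p (π (p x) x) = p x) (h' : ∀ x : X, p ((π (p x)).symm x) = p x) :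
    Equiv.Perm X where
  toFun x := π (p x) x
  invFun x := (π (p x)).symm x
  left_inv x := by simp [h]
  right_inv x := by simp [h']

section Expansion

variable {D} {v : V} (S : D.Distribution v) (dir : Fin 4 → Bool)

open Classical in
/-- The new vertex to which an old edge-end at `v` is reattached. -/
noncomputable def Distribution.corner (x : E × Bool) : Fin 4 :=
  if x ∈ S.block 0 then 0 else if x ∈ S.block 1 then 1 else if x ∈ S.block 2 then 2 else 3

open Classical in
/-- The vertex at an edge-end of the expanded digraph. The vertex `v` is replaced by the four
vertices `Sum.inr i`. The new edge `Sum.inr i` joins the vertices `i` and `i + 1` (cyclically), and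
it is directed from `i` to `i + 1` if `dir i` is true and from `i + 1` to `i` otherwise. -/
noncomputable def Distribution.newVert :
    (E ⊕ Fin 4) × Bool → {u : V // u ≠ v} ⊕ Fin 4
  | (Sum.inl e, k) =>
      if h : D.vert (e, k) = v then Sum.inr (S.corner (e, k)) else Sum.inl ⟨D.vert (e, k), h⟩
  | (Sum.inr i, k) => Sum.inr (if k = dir i then i else i + 1)

/-- The edge-ends at the new vertex `i` in clockwise order: the edge to the vertex `i - 1`, the old
edge-ends reattached to `i`, and the edge to the vertex `i + 1`. -/
def Distribution.newList (i : Fin 4) : List ((E ⊕ Fin 4) × Bool) :=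
  (Sum.inr (i - 1), !dir (i - 1)) :: ((S.block i).map oldEnd ++ [(Sum.inr i, dir i)])

open Classical in
/-- The clockwise rotation around each vertex of the expanded digraph: the old one around the old
vertices other than `v`, and the cyclic order of `newList i` around the new vertex `i`. -/
noncomputable def Distribution.localRot :
    {u : V // u ≠ v} ⊕ Fin 4 → Equiv.Perm ((E ⊕ Fin 4) × Bool)
  | Sum.inl _ => extendRot D.rot
  | Sum.inr i => (S.newList dir i).formPerm

theorem Distribution.corner_eq_iff {x : E × Bool} (hx : D.vert x = v) (i : Fin 4) :
    S.corner x = i ↔ x ∈ S.block i := by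
  have hm := (S.mem_iff x).2 hx
  have hn := S.nodup
  simp only [List.nodup_append, List.mem_append] at hn hm
  unfold Distribution.corner
  fin_cases i <;> simp only [Fin.zero_eta, Fin.mk_one, Fin.reduceFinMk] <;> split_ifs <;>
    simp only [Fin.reduceEq, false_iff, true_iff] <;> grind

theorem Distribution.mem_newList_iff (x : (E ⊕ Fin 4) × Bool) (i : Fin 4) :
    x ∈ S.newList dir i ↔ S.newVert dir x = Sum.inr i := by
  obtain ⟨e | j, k⟩ := x
  · have hb : (Sum.inl e, k) ∈ S.newList dir i ↔ (e, k) ∈ S.block i := by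
      simp [Distribution.newList, oldEnd]
    rw [hb]
    by_cases h : D.vert (e, k) = v
    · simp [Distribution.newVert, h, S.corner_eq_iff h]
    · simp only [Distribution.newVert, h, dite_false, reduceCtorEq, iff_false]
      intro hm
      refine h ((S.mem_iff _).1 ?_)
      simp only [List.mem_append]
      fin_cases i <;> simp_all
  · simp only [Distribution.newList, oldEnd, Distribution.newVert, List.mem_cons, List.mem_append,
      List.mem_map, Prod.mk.injEq, reduceCtorEq, false_and, and_false, exists_false, false_or,
      List.not_mem_nil, or_false, Sum.inr.injEq]
    have h1 : j = i - 1 ↔ j + 1 = i := by rw [eq_sub_iff_add_eq]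
    have h2 : j + 1 ≠ j := by simp
    by_cases hj : j = i
    · subst hj
      have h3 : j ≠ j - 1 := fun h => h2 (h1.1 h)
      cases k <;> cases dir j <;> simp [h3]
    · by_cases hj' : j = i - 1
      · have h4 : i - 1 ≠ i := hj' ▸ hj
        subst hj'
        cases k <;> cases dir (i - 1) <;> simp [h4]
      · have h5 : j + 1 ≠ i := fun h => hj' (h1.2 h)
        simp only [hj, hj', false_and, or_self, false_iff]
        split_ifs <;> assumption

theorem Distribution.nodup_newList (i : Fin 4) : (S.newList dir i).Nodup := by
  have hn : (S.block i).Nodup := by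
    have := S.nodup
    simp only [List.nodup_append] at this
    fin_cases i <;> simp_all
  have ho : Function.Injective (oldEnd : E × Bool → _) := by
    rintro ⟨e, k⟩ ⟨e', k'⟩ h
    simpa [oldEnd] using h
  have hi : i - 1 ≠ i := by fin_cases i <;> simp
  simp [Distribution.newList, List.nodup_append, hn.map ho, oldEnd, hi]

theorem extendRot_inl (σ : Equiv.Perm (E × Bool)) (x : E × Bool) :
    extendRot σ (oldEnd x) = oldEnd (σ x) := rfl

theorem extendRot_symm_inl (σ : Equiv.Perm (E × Bool)) (x : E × Bool) :
    (extendRot σ).symm (oldEnd x) = oldEnd (σ.symm x) := rfl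

theorem vert_rot (x : E × Bool) : D.vert (D.rot x) = D.vert x :=
  ((D.sameCycle_rot_iff _ _).1 (Equiv.Perm.sameCycle_apply_left.2 (Equiv.Perm.SameCycle.refl _ _)))

theorem vert_rot_symm (x : E × Bool) : D.vert (D.rot.symm x) = D.vert x := by
  conv_rhs => rw [← D.rot.apply_symm_apply x, vert_rot]

theorem Distribution.newVert_oldEnd {x : E × Bool} (h : D.vert x ≠ v) :
    S.newVert dir (oldEnd x) = Sum.inl ⟨D.vert x, h⟩ := by
  simp [oldEnd, Distribution.newVert, h]

theorem Distribution.exists_of_newVert {x : (E ⊕ Fin 4) × Bool} {u : {u : V // u ≠ v}}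
    (h : S.newVert dir x = Sum.inl u) : ∃ y : E × Bool, x = oldEnd y ∧ D.vert y = u := by
  obtain ⟨e | j, k⟩ := x
  · refine ⟨(e, k), rfl, ?_⟩
    by_cases h' : D.vert (e, k) = v
    · simp [Distribution.newVert, h'] at h
    · simp only [Distribution.newVert, h', dite_false, Sum.inl.injEq] at h
      rw [← h]
  · simp [Distribution.newVert] at h

open Classical in
theorem Distribution.newVert_localRot (x : (E ⊕ Fin 4) × Bool) :
    S.newVert dir (S.localRot dir (S.newVert dir x) x) = S.newVert dir x := by
  rcases h : S.newVert dir x with u | i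
  · obtain ⟨y, rfl, hy⟩ := S.exists_of_newVert dir h
    have hv : D.vert (D.rot y) ≠ v := by rw [vert_rot, hy]; exact u.2
    simp only [Distribution.localRot, extendRot_inl, S.newVert_oldEnd dir hv, vert_rot, hy]
  · rw [← S.mem_newList_iff] at h ⊢
    exact List.formPerm_apply_mem_of_mem h

open Classical in
theorem Distribution.newVert_localRot_symm (x : (E ⊕ Fin 4) × Bool) :
    S.newVert dir ((S.localRot dir (S.newVert dir x)).symm x) = S.newVert dir x := by
  rcases h : S.newVert dir x with u | i
  · obtain ⟨y, rfl, hy⟩ := S.exists_of_newVert dir h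
    have hv : D.vert (D.rot.symm y) ≠ v := by rw [vert_rot_symm, hy]; exact u.2
    simp only [Distribution.localRot, extendRot_symm_inl, S.newVert_oldEnd dir hv, vert_rot_symm,
      hy]
  · rw [← S.mem_newList_iff] at h ⊢
    refine List.mem_of_formPerm_apply_mem (l := S.newList dir i) ?_
    simpa [Distribution.localRot] using h

/-- The clockwise rotation of the expanded digraph. -/
noncomputable def Distribution.newRot : Equiv.Perm ((E ⊕ Fin 4) × Bool) :=
  gluePerm (S.newVert dir) (S.localRot dir) (S.newVert_localRot dir) (S.newVert_localRot_symm dir)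

theorem Distribution.newVert_newRot_zpow (x : (E ⊕ Fin 4) × Bool) (n : ℤ) :
    S.newVert dir ((S.newRot dir ^ n) x) = S.newVert dir x ∧
      (S.newRot dir ^ n) x = (S.localRot dir (S.newVert dir x) ^ n) x := by
  induction n with
  | zero => simp
  | succ n ih =>
    rw [add_comm, zpow_add, zpow_add, zpow_one, zpow_one, Equiv.Perm.mul_apply,
      Equiv.Perm.mul_apply, ← ih.2]
    constructor
    · rw [← ih.1]; exact S.newVert_localRot dir _
    · conv_rhs => rw [← ih.1]
      rfl
  | pred n ih =>
    rw [sub_eq_add_neg, add_comm, zpow_add, zpow_add, zpow_neg_one, zpow_neg_one,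
      Equiv.Perm.mul_apply, Equiv.Perm.mul_apply, ← ih.2]
    constructor
    · rw [← ih.1]; exact S.newVert_localRot_symm dir _
    · conv_rhs => rw [← ih.1]
      rfl

theorem extendRot_zpow (σ : Equiv.Perm (E × Bool)) (n : ℤ) (x : E × Bool) :
    (extendRot σ ^ n) (oldEnd x) = oldEnd ((σ ^ n) x) := by
  induction n with
  | zero => simp
  | succ n ih =>
    rw [add_comm, zpow_add, zpow_add, zpow_one, zpow_one, Equiv.Perm.mul_apply,
      Equiv.Perm.mul_apply, ih, extendRot_inl]
  | pred n ih =>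
    rw [sub_eq_add_neg, add_comm, zpow_add, zpow_add, zpow_neg_one, zpow_neg_one,
      Equiv.Perm.mul_apply, Equiv.Perm.mul_apply, ih]
    exact extendRot_symm_inl _ _

open Classical in
theorem Distribution.sameCycle_newRot_iff (x y : (E ⊕ Fin 4) × Bool) :
    (S.newRot dir).SameCycle x y ↔ S.newVert dir x = S.newVert dir y := by
  constructor
  · rintro ⟨n, rfl⟩
    exact (S.newVert_newRot_zpow dir x n).1.symm
  · intro h
    suffices (S.localRot dir (S.newVert dir x)).SameCycle x y by
      obtain ⟨n, hn⟩ := this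
      exact ⟨n, by rw [(S.newVert_newRot_zpow dir x n).2, hn]⟩
    rcases hx : S.newVert dir x with u | i
    · obtain ⟨x, rfl, hx'⟩ := S.exists_of_newVert dir hx
      obtain ⟨y, rfl, hy'⟩ := S.exists_of_newVert dir (h ▸ hx)
      obtain ⟨n, hn⟩ := (D.sameCycle_rot_iff x y).2 (hx'.trans hy'.symm)
      exact ⟨n, by rw [Distribution.localRot, extendRot_zpow, hn]⟩
    · have hx' := (S.mem_newList_iff dir x i).2 hx
      have hy' := (S.mem_newList_iff dir y i).2 (h ▸ hx)
      have hl : 2 ≤ (S.newList dir i).length := by simp [Distribution.newList]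
      have hc := List.isCycle_formPerm (S.nodup_newList dir i) hl
      have hne : ∀ z ∈ S.newList dir i, (S.newList dir i).formPerm z ≠ z := fun z hz =>
        (List.formPerm_apply_mem_ne_self_iff _ (S.nodup_newList dir i) z hz).2 hl
      exact hc.sameCycle (hne x hx') (hne y hy')

/-- The expansion of the vertex `v` into a quadrilateral face. Its vertices are the old vertices
other than `v` and the vertices `Sum.inr 0, Sum.inr 1, Sum.inr 2, Sum.inr 3` of the new face in
clockwise order; its edges are the old edges, reattached according to `S`, and the four boundary
edges of the new face, directed according to `dir`. The outer face is the old outer face. -/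
noncomputable def expand (S : D.Distribution v) (dir : Fin 4 → Bool) :
    EmbeddedDigraph ({u : V // u ≠ v} ⊕ Fin 4) (E ⊕ Fin 4) where
  src e := S.newVert dir (e, true)
  tgt e := S.newVert dir (e, false)
  rot := S.newRot dir
  sameCycle_rot_iff := by
    have h : endVertex (fun e => S.newVert dir (e, true)) (fun e => S.newVert dir (e, false)) =
        S.newVert dir := by
      funext ⟨e, k⟩
      cases k <;> simp [endVertex]
    intro x y
    rw [h]
    exact S.sameCycle_newRot_iff dir x y
  outer := oldEnd D.outer

/-- The vertex `i` of the new face lies on the boundary of the outer face. This does not depend on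
how the four boundary edges of the new face are directed. -/
def Distribution.CornerOnOuterFace (i : Fin 4) : Prop :=
  (expand S (fun _ => true)).OnOuterFace (Sum.inr i)

end Expansion

end EmbeddedDigraph

namespace EmbeddedDigraph

section Rotation

theorem formPerm_apply_of_eq_append {α : Type*} [DecidableEq α] {l l₁ l₂ : List α} {a b : α}
    (hn : l.Nodup) (h : l = l₁ ++ a :: b :: l₂) : l.formPerm a = b := by
  subst h
  have := List.formPerm_apply_lt_getElem (l₁ ++ a :: b :: l₂) hn l₁.length (by simp)
  simpa using this

variable {V E : Type*} {D : EmbeddedDigraph V E} {v : V} (S : D.Distribution v)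
  (dir : Fin 4 → Bool)

theorem Distribution.vert_of_mem {i : Fin 4} {x : E × Bool} (h : x ∈ S.block i) :
    D.vert x = v := by
  refine (S.mem_iff x).1 ?_
  simp only [List.mem_append]
  fin_cases i <;> simp_all

theorem Distribution.exists_mem_block {x : E × Bool} (h : D.vert x = v) :
    ∃ i, x ∈ S.block i :=
  ⟨_, (S.corner_eq_iff h _).1 rfl⟩

theorem Distribution.eq_of_mem_of_mem {i j : Fin 4} {x : E × Bool} (hi : x ∈ S.block i)
    (hj : x ∈ S.block j) : i = j := by
  have h := S.vert_of_mem hi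
  rw [← (S.corner_eq_iff h i).2 hi, (S.corner_eq_iff h j).2 hj]

/-- The edge-ends at `v` in clockwise order, starting with the block `i`. -/
def Distribution.blocksFrom (i : Fin 4) : List (E × Bool) :=
  S.block i ++ S.block (i + 1) ++ S.block (i + 2) ++ S.block (i + 3)

theorem Distribution.blocksFrom_of_nil {i : Fin 4} (h : S.block i = []) :
    S.blocksFrom i = S.blocksFrom (i + 1) := by
  have h1 : i + 1 + 1 = i + 2 := by rw [add_assoc]; rfl
  have h2 : i + 1 + 2 = i + 3 := by rw [add_assoc]; rfl
  have h3 : i + 1 + 3 = i := by rw [add_assoc]; exact add_zero i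
  simp [Distribution.blocksFrom, h, h1, h2, h3]

theorem Distribution.chain_blocksFrom (i : Fin 4) :
    Cycle.Chain (fun x y => D.rot x = y) (S.blocksFrom i : Cycle (E × Bool)) := by
  have key : (S.blocksFrom i : Cycle (E × Bool)) =
      ((S.block 0 ++ S.block 1 ++ S.block 2 ++ S.block 3 : List (E × Bool)) :
        Cycle (E × Bool)) := by
    rw [Cycle.coe_eq_coe]
    fin_cases i
    · exact List.IsRotated.refl _
    · have := List.isRotated_append (l := S.block 1 ++ S.block 2 ++ S.block 3) (l' := S.block 0)
      simpa [Distribution.blocksFrom] using this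
    · have := List.isRotated_append (l := S.block 2 ++ S.block 3) (l' := S.block 0 ++ S.block 1)
      simpa [Distribution.blocksFrom] using this
    · have := List.isRotated_append (l := S.block 3) (l' := S.block 0 ++ S.block 1 ++ S.block 2)
      simpa [Distribution.blocksFrom] using this
  rw [key]
  exact S.clockwise

theorem rot_eq_of_chain {l l₁ l₂ : List (E × Bool)} {a b : E × Bool}
    (hc : Cycle.Chain (fun x y => D.rot x = y) (l : Cycle (E × Bool)))
    (h : l = l₁ ++ a :: b :: l₂) : D.rot a = b := by
  subst h
  rcases l₁ with _ | ⟨c, l₁⟩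
  · simp only [List.nil_append, Cycle.chain_coe_cons] at hc
    simp at hc
    exact hc.1
  · rw [List.cons_append, Cycle.chain_coe_cons, List.append_assoc, ← List.cons_append,
      List.isChain_append] at hc
    have := hc.2.1
    simp at this
    exact this.1

theorem rot_getLast_of_chain {l l₁ : List (E × Bool)} {a b : E × Bool}
    (hc : Cycle.Chain (fun x y => D.rot x = y) (l : Cycle (E × Bool)))
    (h : l = l₁ ++ [a]) (hb : l.head? = some b) : D.rot a = b := by
  subst h
  rcases l₁ with _ | ⟨c, l₁⟩
  · simp at hb hc
    rw [hc, hb]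
  · simp only [List.cons_append, List.head?_cons, Option.some.injEq] at hb
    subst hb
    rw [List.cons_append, Cycle.chain_coe_cons, List.append_assoc, ← List.cons_append,
      List.isChain_append] at hc
    have := hc.2.1
    simpa using this

theorem Distribution.rot_eq_of_block {i : Fin 4} {l₁ l₂ : List (E × Bool)} {a b : E × Bool}
    (h : S.block i = l₁ ++ a :: b :: l₂) : D.rot a = b :=
  rot_eq_of_chain (S.chain_blocksFrom i)
    (l₁ := l₁) (l₂ := l₂ ++ S.block (i + 1) ++ S.block (i + 2) ++ S.block (i + 3))
    (by simp [Distribution.blocksFrom, h])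

theorem Distribution.rot_last_of_block {i : Fin 4} {l : List (E × Bool)} {a : E × Bool}
    (h : S.block i = l ++ [a]) : (S.blocksFrom (i + 1)).head? = some (D.rot a) := by
  have h1 : i + 1 + 1 = i + 2 := by rw [add_assoc]; rfl
  have h2 : i + 1 + 2 = i + 3 := by rw [add_assoc]; rfl
  have h3 : i + 1 + 3 = i := by rw [add_assoc]; exact add_zero i
  have he : S.blocksFrom (i + 1) =
      (S.block (i + 1) ++ S.block (i + 2) ++ S.block (i + 3) ++ l) ++ [a] := by
    simp [Distribution.blocksFrom, h1, h2, h3, h]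
  rcases hb : (S.blocksFrom (i + 1)).head? with _ | b
  · rw [he] at hb
    simp at hb
  · rw [rot_getLast_of_chain (S.chain_blocksFrom (i + 1)) he hb]

theorem Distribution.newRot_of_vert_ne {x : E × Bool} (h : D.vert x ≠ v) :
    S.newRot dir (oldEnd x) = oldEnd (D.rot x) := by
  change S.localRot dir (S.newVert dir (oldEnd x)) (oldEnd x) = _
  rw [S.newVert_oldEnd dir h]
  rfl

open Classical in
theorem Distribution.newRot_of_mem_newList {x : (E ⊕ Fin 4) × Bool} {i : Fin 4}
    (h : x ∈ S.newList dir i) : S.newRot dir x = (S.newList dir i).formPerm x := by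
  change S.localRot dir (S.newVert dir x) x = _
  rw [(S.mem_newList_iff dir x i).1 h]
  rfl

theorem Distribution.newRot_of_newList_eq {i : Fin 4} {l₁ l₂ : List ((E ⊕ Fin 4) × Bool)}
    {a b : (E ⊕ Fin 4) × Bool} (h : S.newList dir i = l₁ ++ a :: b :: l₂) :
    S.newRot dir a = b := by
  classical
  rw [S.newRot_of_mem_newList dir (i := i) (by simp [h])]
  exact formPerm_apply_of_eq_append (S.nodup_newList dir i) h

theorem Distribution.newRot_of_block {i : Fin 4} {l₁ l₂ : List (E × Bool)} {a b : E × Bool}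
    (h : S.block i = l₁ ++ a :: b :: l₂) : S.newRot dir (oldEnd a) = oldEnd b :=
  S.newRot_of_newList_eq dir (i := i) (l₁ := (Sum.inr (i - 1), !dir (i - 1)) :: l₁.map oldEnd)
    (l₂ := l₂.map oldEnd ++ [(Sum.inr i, dir i)]) (by simp [Distribution.newList, h])

theorem Distribution.newRot_last_of_block {i : Fin 4} {l : List (E × Bool)} {a : E × Bool}
    (h : S.block i = l ++ [a]) : S.newRot dir (oldEnd a) = (Sum.inr i, dir i) :=
  S.newRot_of_newList_eq dir (i := i) (l₁ := (Sum.inr (i - 1), !dir (i - 1)) :: l.map oldEnd)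
    (l₂ := []) (by simp [Distribution.newList, h])

theorem Distribution.newRot_inr_tail_of_cons {i : Fin 4} {l : List (E × Bool)} {a : E × Bool}
    (h : S.block (i + 1) = a :: l) : S.newRot dir (Sum.inr i, !dir i) = oldEnd a :=
  S.newRot_of_newList_eq dir (i := i + 1) (l₁ := [])
    (l₂ := l.map oldEnd ++ [(Sum.inr (i + 1), dir (i + 1))]) (by simp [Distribution.newList, h])

theorem Distribution.newRot_inr_tail_of_nil {i : Fin 4} (h : S.block (i + 1) = []) :
    S.newRot dir (Sum.inr i, !dir i) = (Sum.inr (i + 1), dir (i + 1)) :=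
  S.newRot_of_newList_eq dir (i := i + 1) (l₁ := []) (l₂ := [])
    (by simp [Distribution.newList, h])

theorem Distribution.newRot_inr_head (i : Fin 4) :
    S.newRot dir (Sum.inr i, dir i) = (Sum.inr (i - 1), !dir (i - 1)) := by
  classical
  rw [S.newRot_of_mem_newList dir (i := i) (by simp [Distribution.newList])]
  simp [Distribution.newList]

theorem faceNext_apply (x : E × Bool) : D.faceNext x = D.rot (x.1, !x.2) := rfl

theorem vert_faceNext (x : E × Bool) : D.vert (D.faceNext x) = D.vert (x.1, !x.2) := vert_rot _

theorem expand_vert (x : (E ⊕ Fin 4) × Bool) : (expand S dir).vert x = S.newVert dir x := by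
  obtain ⟨e, k⟩ := x
  cases k <;> simp [vert, endVertex, expand]

theorem expand_faceNext_apply (x : (E ⊕ Fin 4) × Bool) :
    (expand S dir).faceNext x = S.newRot dir (x.1, !x.2) := rfl

end Rotation

section Faces

variable {V E : Type*} {D : EmbeddedDigraph V E} {v : V} (S : D.Distribution v)
  (dir : Fin 4 → Bool)

/-- The face of an edge-end. -/
def toFace (D : EmbeddedDigraph V E) (x : E × Bool) : D.Face :=
  Quotient.mk (Equiv.Perm.SameCycle.setoid D.faceNext) x

theorem toFace_eq_iff {x y : E × Bool} :
    D.toFace x = D.toFace y ↔ D.faceNext.SameCycle x y := Quotient.eq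

theorem toFace_faceNext (x : E × Bool) : D.toFace (D.faceNext x) = D.toFace x :=
  toFace_eq_iff.2 (Equiv.Perm.sameCycle_apply_left.2 (Equiv.Perm.SameCycle.refl _ _))

/-- The old face that contains an edge-end of the expanded digraph, or `none` for the new face. -/
def Distribution.oldFace : (E ⊕ Fin 4) × Bool → Option D.Face
  | (Sum.inl e, k) => some (D.toFace (e, k))
  | (Sum.inr i, k) => if k = dir i then (S.blocksFrom (i + 1)).head?.map D.toFace else none

theorem Distribution.oldFace_oldEnd (x : E × Bool) :
    S.oldFace dir (oldEnd x) = some (D.toFace x) := rfl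

theorem Distribution.oldFace_inr_head (i : Fin 4) :
    S.oldFace dir (Sum.inr i, dir i) = (S.blocksFrom (i + 1)).head?.map D.toFace := by
  simp [Distribution.oldFace]

theorem Distribution.oldFace_inr_tail (i : Fin 4) :
    S.oldFace dir (Sum.inr i, !dir i) = none := by
  simp [Distribution.oldFace]

/-- A step of a boundary walk from an old edge-end goes either to the next old edge-end, or to a
boundary edge of the new face that precedes it. -/
theorem Distribution.faceNext_oldEnd (x : E × Bool) :
    (expand S dir).faceNext (oldEnd x) = oldEnd (D.faceNext x) ∨
      ∃ i, (expand S dir).faceNext (oldEnd x) = (Sum.inr i, dir i) ∧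
        (S.blocksFrom (i + 1)).head? = some (D.faceNext x) := by
  rw [expand_faceNext_apply, faceNext_apply]
  change S.newRot dir (oldEnd (x.1, !x.2)) = _ ∨ ∃ i, S.newRot dir (oldEnd (x.1, !x.2)) = _ ∧ _
  generalize (x.1, !x.2) = y
  by_cases hy : D.vert y = v
  · obtain ⟨i, hi⟩ := S.exists_mem_block hy
    obtain ⟨l₁, l₂, h⟩ := List.append_of_mem hi
    rcases l₂ with _ | ⟨b, l₂⟩
    · exact Or.inr ⟨i, S.newRot_last_of_block dir h, S.rot_last_of_block h⟩
    · left
      rw [S.newRot_of_block dir h, S.rot_eq_of_block h]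
  · exact Or.inl (S.newRot_of_vert_ne dir hy)

theorem Distribution.faceNext_inr_head (i : Fin 4) :
    (∃ a, (expand S dir).faceNext (Sum.inr i, dir i) = oldEnd a ∧
      (S.blocksFrom (i + 1)).head? = some a) ∨
    (S.block (i + 1) = [] ∧
      (expand S dir).faceNext (Sum.inr i, dir i) = (Sum.inr (i + 1), dir (i + 1))) := by
  rw [expand_faceNext_apply]
  rcases h : S.block (i + 1) with _ | ⟨a, l⟩
  · exact Or.inr ⟨rfl, S.newRot_inr_tail_of_nil dir h⟩
  · exact Or.inl ⟨a, S.newRot_inr_tail_of_cons dir h, by simp [Distribution.blocksFrom, h]⟩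

theorem Distribution.faceNext_inr_tail (i : Fin 4) :
    (expand S dir).faceNext (Sum.inr i, !dir i) = (Sum.inr (i - 1), !dir (i - 1)) := by
  rw [expand_faceNext_apply, Bool.not_not]
  exact S.newRot_inr_head dir i

theorem eq_or_eq_not (k l : Bool) : k = l ∨ k = !l := by
  cases k <;> cases l <;> simp

theorem Distribution.oldFace_faceNext (x : (E ⊕ Fin 4) × Bool) :
    S.oldFace dir ((expand S dir).faceNext x) = S.oldFace dir x := by
  obtain ⟨e | i, k⟩ := x
  · change S.oldFace dir ((expand S dir).faceNext (oldEnd (e, k))) = S.oldFace dir (oldEnd (e, k))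
    rw [S.oldFace_oldEnd]
    rcases S.faceNext_oldEnd dir (e, k) with h | ⟨i, h, hi⟩
    · rw [h, S.oldFace_oldEnd, toFace_faceNext]
    · rw [h, S.oldFace_inr_head, hi, Option.map_some, toFace_faceNext]
  · rcases eq_or_eq_not k (dir i) with rfl | rfl
    · rcases S.faceNext_inr_head dir i with ⟨a, h, ha⟩ | ⟨hn, h⟩
      · rw [h, S.oldFace_oldEnd, S.oldFace_inr_head, ha, Option.map_some]
      · rw [h, S.oldFace_inr_head, S.oldFace_inr_head, S.blocksFrom_of_nil hn]
    · rw [S.faceNext_inr_tail, S.oldFace_inr_tail, S.oldFace_inr_tail]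

theorem Distribution.oldFace_eq_of_sameCycle {x y : (E ⊕ Fin 4) × Bool}
    (h : (expand S dir).faceNext.SameCycle x y) : S.oldFace dir x = S.oldFace dir y := by
  obtain ⟨n, rfl⟩ := h
  induction n with
  | zero => rfl
  | succ n ih =>
    rw [add_comm, zpow_add, zpow_one, Equiv.Perm.mul_apply, S.oldFace_faceNext]
    exact ih
  | pred n ih =>
    rw [ih, ← S.oldFace_faceNext dir (((expand S dir).faceNext ^ (-(n : ℤ) - 1)) x),
      ← Equiv.Perm.mul_apply, ← zpow_one_add, add_sub_cancel]

theorem sameCycle_next {α : Type*} {σ : Equiv.Perm α} {x y z : α} (h : σ x = z)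
    (h' : σ.SameCycle z y) : σ.SameCycle x y := by
  subst h
  exact Equiv.Perm.sameCycle_apply_left.1 h'

theorem Distribution.sameCycle_inr_head {i : Fin 4} {a : E × Bool}
    (ha : (S.blocksFrom (i + 1)).head? = some a) :
    (expand S dir).faceNext.SameCycle (Sum.inr i, dir i) (oldEnd a) := by
  have step : ∀ i : Fin 4, (S.blocksFrom (i + 1)).head? = some a →
      (expand S dir).faceNext.SameCycle (Sum.inr i, dir i) (oldEnd a) ∨
      (S.block (i + 1) = [] ∧ (S.blocksFrom (i + 1 + 1)).head? = some a ∧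
        ((expand S dir).faceNext.SameCycle (Sum.inr (i + 1), dir (i + 1)) (oldEnd a) →
        (expand S dir).faceNext.SameCycle (Sum.inr i, dir i) (oldEnd a))) := by
    intro i hi
    rcases S.faceNext_inr_head dir i with ⟨b, h, hb⟩ | ⟨hn, h⟩
    · rw [hi, Option.some.injEq] at hb
      subst hb
      exact Or.inl (sameCycle_next h (Equiv.Perm.SameCycle.refl _ _))
    · exact Or.inr ⟨hn, by rw [← S.blocksFrom_of_nil hn, hi], sameCycle_next h⟩
  rcases step i ha with h | ⟨h1, ha1, f1⟩
  · exact h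
  rcases step _ ha1 with h | ⟨h2, ha2, f2⟩
  · exact f1 h
  rcases step _ ha2 with h | ⟨h3, ha3, f3⟩
  · exact f1 (f2 h)
  rcases step _ ha3 with h | ⟨h4, -, -⟩
  · exact f1 (f2 (f3 h))
  · have e1 : i + 1 + 1 = i + 2 := by rw [add_assoc]; rfl
    have e2 : i + 2 + 1 = i + 3 := by rw [add_assoc]; rfl
    have e3 : i + 3 + 1 = i := by rw [add_assoc]; exact add_zero i
    have e4 : i + 1 + 2 = i + 3 := by rw [add_assoc]; rfl
    have e5 : i + 1 + 3 = i := by rw [add_assoc]; exact add_zero i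
    rw [e1] at h2 h3 h4
    rw [e2] at h3 h4
    rw [e3] at h4
    simp [Distribution.blocksFrom, e1, e4, e5, h1, h2, h3, h4] at ha

theorem Distribution.sameCycle_oldEnd {x y : E × Bool} (h : D.faceNext.SameCycle x y) :
    (expand S dir).faceNext.SameCycle (oldEnd x) (oldEnd y) := by
  have step : ∀ x, (expand S dir).faceNext.SameCycle (oldEnd x) (oldEnd (D.faceNext x)) := by
    intro x
    rcases S.faceNext_oldEnd dir x with h | ⟨i, h, hi⟩
    · exact sameCycle_next h (Equiv.Perm.SameCycle.refl _ _)
    · exact sameCycle_next h (S.sameCycle_inr_head dir hi)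
  obtain ⟨n, rfl⟩ := h
  induction n with
  | zero => exact Equiv.Perm.SameCycle.refl _ _
  | succ n ih =>
    rw [add_comm, zpow_add, zpow_one, Equiv.Perm.mul_apply]
    exact ih.trans (step _)
  | pred n ih =>
    refine ih.trans ?_
    have := (step ((D.faceNext ^ (-(n : ℤ) - 1)) x)).symm
    rwa [← Equiv.Perm.mul_apply, ← zpow_one_add, add_sub_cancel] at this

theorem Distribution.sameCycle_inr_tail (i j : Fin 4) :
    (expand S dir).faceNext.SameCycle (Sum.inr i, !dir i) (Sum.inr j, !dir j) := by
  have step : ∀ i : Fin 4, (expand S dir).faceNext.SameCycle (Sum.inr (i + 1), !dir (i + 1))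
      (Sum.inr i, !dir i) := fun i => by
    refine sameCycle_next (S.faceNext_inr_tail dir (i + 1)) ?_
    rw [add_sub_cancel_right]
  have zero : ∀ i : Fin 4, (expand S dir).faceNext.SameCycle (Sum.inr i, !dir i)
      (Sum.inr 0, !dir 0) := by
    intro i
    fin_cases i
    · exact Equiv.Perm.SameCycle.refl _ _
    · exact step 0
    · exact (step 1).trans (step 0)
    · exact (step 2).trans ((step 1).trans (step 0))
  exact (zero i).trans (zero j).symm

theorem Distribution.blocksFrom_ne_nil {x : E × Bool} (hx : D.vert x = v) (i : Fin 4) :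
    S.blocksFrom i ≠ [] := by
  intro h
  obtain ⟨j, hj⟩ := S.exists_mem_block hx
  simp only [Distribution.blocksFrom, List.append_eq_nil_iff] at h
  have : S.block j = [] := by
    obtain ⟨⟨⟨h0, h1⟩, h2⟩, h3⟩ := h
    fin_cases i <;> fin_cases j <;> first | exact h0 | exact h1 | exact h2 | exact h3
  simp [this] at hj

theorem Distribution.exists_sameCycle_oldEnd {x₀ : E × Bool} (hx₀ : D.vert x₀ = v)
    (a : (E ⊕ Fin 4) × Bool) :
    (∃ x, S.oldFace dir a = some (D.toFace x) ∧
      (expand S dir).faceNext.SameCycle a (oldEnd x)) ∨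
    (S.oldFace dir a = none ∧ (expand S dir).faceNext.SameCycle a (Sum.inr 0, !dir 0)) := by
  obtain ⟨e | i, k⟩ := a
  · exact Or.inl ⟨(e, k), rfl, Equiv.Perm.SameCycle.refl _ _⟩
  · rcases eq_or_eq_not k (dir i) with rfl | rfl
    · obtain ⟨a, l, ha⟩ := List.exists_cons_of_ne_nil (S.blocksFrom_ne_nil hx₀ (i + 1))
      have ha' : (S.blocksFrom (i + 1)).head? = some a := by simp [ha]
      exact Or.inl ⟨a, by rw [S.oldFace_inr_head, ha', Option.map_some],
        S.sameCycle_inr_head dir ha'⟩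
    · exact Or.inr ⟨S.oldFace_inr_tail dir i, S.sameCycle_inr_tail dir i 0⟩

theorem Distribution.sameCycle_iff_oldFace_eq {x₀ : E × Bool} (hx₀ : D.vert x₀ = v)
    (a b : (E ⊕ Fin 4) × Bool) :
    (expand S dir).faceNext.SameCycle a b ↔ S.oldFace dir a = S.oldFace dir b := by
  refine ⟨S.oldFace_eq_of_sameCycle dir, fun h => ?_⟩
  rcases S.exists_sameCycle_oldEnd dir hx₀ a with ⟨x, hx, hax⟩ | ⟨hx, hax⟩ <;>
    rcases S.exists_sameCycle_oldEnd dir hx₀ b with ⟨y, hy, hby⟩ | ⟨hy, hby⟩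
  · rw [hx, hy, Option.some.injEq, toFace_eq_iff] at h
    exact hax.trans ((S.sameCycle_oldEnd dir h).trans hby.symm)
  · simp [hx, hy] at h
  · simp [hx, hy] at h
  · exact hax.trans hby.symm

/-- The faces of the expanded digraph are the old faces and the new one. -/
theorem Distribution.card_face [Finite E] {x₀ : E × Bool} (hx₀ : D.vert x₀ = v) :
    Nat.card (expand S dir).Face = Nat.card D.Face + 1 := by
  have : Finite D.Face := Quotient.finite _
  rw [← Finite.card_option]
  refine Nat.card_congr (Equiv.ofBijective
    (Quotient.lift (S.oldFace dir) fun _ _ h => S.oldFace_eq_of_sameCycle dir h) ⟨?_, ?_⟩)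
  · intro p q
    induction p using Quotient.inductionOn
    induction q using Quotient.inductionOn
    exact fun h => Quotient.sound ((S.sameCycle_iff_oldFace_eq dir hx₀ _ _).2 h)
  · rintro (_ | q)
    · exact ⟨Quotient.mk _ (Sum.inr 0, !dir 0), S.oldFace_inr_tail dir 0⟩
    · induction q using Quotient.inductionOn with
      | _ x => exact ⟨Quotient.mk _ (oldEnd x), rfl⟩

theorem Distribution.newVert_inr_head (i : Fin 4) :
    S.newVert dir (Sum.inr i, dir i) = Sum.inr i := by
  simp [Distribution.newVert]

theorem Distribution.newVert_inr_tail (i : Fin 4) :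
    S.newVert dir (Sum.inr i, !dir i) = Sum.inr (i + 1) := by
  simp [Distribution.newVert]

theorem Distribution.newVert_of_mem_block {i : Fin 4} {x : E × Bool} (h : x ∈ S.block i) :
    S.newVert dir (oldEnd x) = Sum.inr i := by
  rw [← S.mem_newList_iff]
  simp only [Distribution.newList, List.mem_cons, List.mem_append, List.mem_map]
  exact Or.inr (Or.inl ⟨x, h, rfl⟩)

theorem Distribution.mem_block_of_newVert {i : Fin 4} {x : E × Bool}
    (h : S.newVert dir (oldEnd x) = Sum.inr i) : x ∈ S.block i := by
  by_cases hv : D.vert x = v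
  · obtain ⟨j, hj⟩ := S.exists_mem_block hv
    rw [S.newVert_of_mem_block dir hj, Sum.inr.injEq] at h
    exact h ▸ hj
  · simp [S.newVert_oldEnd dir hv] at h

theorem Distribution.onOuterFace_inr_iff {x₀ : E × Bool} (hx₀ : D.vert x₀ = v) (i : Fin 4) :
    (expand S dir).OnOuterFace (Sum.inr i) ↔
      (∃ x ∈ S.block i, D.toFace x = D.toFace D.outer) ∨
      (S.blocksFrom (i + 1)).head?.map D.toFace = some (D.toFace D.outer) := by
  have ho : S.oldFace dir (expand S dir).outer = some (D.toFace D.outer) := rfl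
  simp only [OnOuterFace, S.sameCycle_iff_oldFace_eq dir hx₀, ho, expand_vert]
  constructor
  · rintro ⟨⟨e | j, k⟩, h, hv⟩
    · exact Or.inl ⟨(e, k), S.mem_block_of_newVert dir hv, (Option.some.inj h).symm⟩
    · rcases eq_or_eq_not k (dir j) with rfl | rfl
      · rw [S.newVert_inr_head, Sum.inr.injEq] at hv
        subst hv
        rw [S.oldFace_inr_head] at h
        exact Or.inr h.symm
      · simp [S.oldFace_inr_tail] at h
  · rintro (⟨x, hx, h⟩ | h)
    · exact ⟨oldEnd x, by rw [S.oldFace_oldEnd, h], S.newVert_of_mem_block dir hx⟩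
    · exact ⟨(Sum.inr i, dir i), by rw [S.oldFace_inr_head, h], S.newVert_inr_head dir i⟩

theorem Distribution.onOuterFace_inr_of_corner {x₀ : E × Bool} (hx₀ : D.vert x₀ = v) {i : Fin 4}
    (h : S.CornerOnOuterFace i) : (expand S dir).OnOuterFace (Sum.inr i) :=
  (S.onOuterFace_inr_iff dir hx₀ i).2 ((S.onOuterFace_inr_iff _ hx₀ i).1 h)

theorem Distribution.onOuterFace_inl {u : {u : V // u ≠ v}} (h : D.OnOuterFace u) :
    (expand S dir).OnOuterFace (Sum.inl u) := by
  obtain ⟨x, hx, hu⟩ := h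
  refine ⟨oldEnd x, S.sameCycle_oldEnd dir hx, ?_⟩
  rw [expand_vert, S.newVert_oldEnd dir (hu ▸ u.2)]
  simp [hu]

theorem Distribution.exists_cornerOnOuterFace (h : D.OnOuterFace v) :
    ∃ i, S.CornerOnOuterFace i := by
  obtain ⟨x, hx, hu⟩ := h
  obtain ⟨i, hi⟩ := S.exists_mem_block hu
  exact ⟨i, oldEnd x, S.sameCycle_oldEnd _ hx, by rw [expand_vert, S.newVert_of_mem_block _ hi]⟩

end Faces

section Plane

variable {V E : Type*} {D : EmbeddedDigraph V E} {v : V} (S : D.Distribution v)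
  (dir : Fin 4 → Bool)

theorem eqvGen_src_tgt (D : EmbeddedDigraph V E) (e : E) (k : Bool) :
    Relation.EqvGen D.Adj (D.vert (e, k)) (D.vert (e, !k)) := by
  have h : D.Adj (D.vert (e, true)) (D.vert (e, false)) := ⟨e, rfl, rfl⟩
  cases k
  · exact (Relation.EqvGen.rel _ _ h).symm
  · exact Relation.EqvGen.rel _ _ h

theorem exists_vert_eq (h : ∀ u w, Relation.EqvGen D.Adj u w) (u : V) : ∃ x, D.vert x = u := by
  have key : ∀ u w, Relation.EqvGen D.Adj u w → ((∃ x, D.vert x = u) ↔ ∃ x, D.vert x = w) := by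
    intro u w huw
    induction huw with
    | rel u w h =>
      obtain ⟨e, rfl, rfl⟩ := h
      exact ⟨fun _ => ⟨(e, false), rfl⟩, fun _ => ⟨(e, true), rfl⟩⟩
    | refl => rfl
    | symm _ _ _ ih => exact ih.symm
    | trans _ _ _ _ _ ih ih' => exact ih.trans ih'
  exact (key _ _ (h (D.vert D.outer) u)).1 ⟨_, rfl⟩

theorem Distribution.eqvGen_inr (i j : Fin 4) :
    Relation.EqvGen (expand S dir).Adj (Sum.inr i) (Sum.inr j) := by
  have step : ∀ i : Fin 4,
      Relation.EqvGen (expand S dir).Adj (Sum.inr (i + 1)) (Sum.inr i) := fun i => by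
    have := eqvGen_src_tgt (expand S dir) (Sum.inr i) (!dir i)
    rwa [Bool.not_not, expand_vert, expand_vert, S.newVert_inr_head, S.newVert_inr_tail] at this
  have zero : ∀ i : Fin 4, Relation.EqvGen (expand S dir).Adj (Sum.inr i) (Sum.inr 0) := by
    intro i
    fin_cases i
    · exact Relation.EqvGen.refl _
    · exact step 0
    · exact (step 1).trans _ _ _ (step 0)
    · exact (step 2).trans _ _ _ ((step 1).trans _ _ _ (step 0))
  exact (zero i).trans _ _ _ (zero j).symm

/-- The vertex of the original digraph that a vertex of the expanded digraph comes from. -/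
def contract : {u : V // u ≠ v} ⊕ Fin 4 → V :=
  Sum.elim Subtype.val fun _ => v

theorem Distribution.contract_newVert_oldEnd (x : E × Bool) :
    contract (S.newVert dir (oldEnd x)) = D.vert x := by
  by_cases h : D.vert x = v
  · simp [Distribution.newVert, oldEnd, contract, h]
  · simp [S.newVert_oldEnd dir h, contract]

theorem Distribution.eqvGen_of_contract_eq {p q : {u : V // u ≠ v} ⊕ Fin 4}
    (h : contract p = contract q) : Relation.EqvGen (expand S dir).Adj p q := by
  rcases p with ⟨p, hp⟩ | i <;> rcases q with ⟨q, hq⟩ | j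
  · have : p = q := h
    subst this
    exact Relation.EqvGen.refl _
  · exact absurd h hp
  · exact absurd h.symm hq
  · exact S.eqvGen_inr dir i j

theorem contract_surjective (u : V) : ∃ p : {u : V // u ≠ v} ⊕ Fin 4, contract p = u := by
  by_cases h : u = v
  · exact ⟨Sum.inr 0, h.symm⟩
  · exact ⟨Sum.inl ⟨u, h⟩, rfl⟩

theorem Distribution.eqvGen_of_eqvGen_contract {u w : V} (h : Relation.EqvGen D.Adj u w) :
    ∀ p q : {u : V // u ≠ v} ⊕ Fin 4, contract p = u → contract q = w →
      Relation.EqvGen (expand S dir).Adj p q := by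
  induction h with
  | rel u w h =>
    obtain ⟨e, rfl, rfl⟩ := h
    intro p q hp hq
    have h1 : Relation.EqvGen (expand S dir).Adj p (S.newVert dir (oldEnd (e, true))) :=
      S.eqvGen_of_contract_eq dir (by rw [hp, S.contract_newVert_oldEnd]; rfl)
    have h2 : Relation.EqvGen (expand S dir).Adj (S.newVert dir (oldEnd (e, false))) q :=
      S.eqvGen_of_contract_eq dir (by rw [hq, S.contract_newVert_oldEnd]; rfl)
    exact h1.trans _ _ _ ((Relation.EqvGen.rel _ _ ⟨Sum.inl e, rfl, rfl⟩).trans _ _ _ h2)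
  | refl u => exact fun p q hp hq => S.eqvGen_of_contract_eq dir (hp.trans hq.symm)
  | symm _ _ _ ih => exact fun p q hp hq => (ih q p hq hp).symm
  | trans _ w _ _ _ ih ih' =>
    intro p q hp hq
    obtain ⟨r, hr⟩ := contract_surjective (v := v) w
    exact (ih p r hp hr).trans _ _ _ (ih' r q hr hq)

theorem Distribution.isPlane_expand [Finite V] [Finite E] (h : D.IsPlane) :
    (expand S dir).IsPlane := by
  refine ⟨fun p q => S.eqvGen_of_eqvGen_contract dir (h.1 _ _) p q rfl rfl, ?_⟩
  obtain ⟨x₀, hx₀⟩ := exists_vert_eq h.1 v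
  have hV : Nat.card {u : V // u ≠ v} + 1 = Nat.card V := by
    classical
    rw [← Finite.card_option]
    exact Nat.card_congr (Equiv.optionSubtypeNe v)
  have := h.2
  rw [S.card_face dir hx₀, Nat.card_sum, Nat.card_sum, Nat.card_eq_fintype_card (α := Fin 4),
    Fintype.card_fin]
  omega

end Plane

section Bimodal

theorem exists_color_change {α : Type*} [Finite α] (σ : Equiv.Perm α) (c : α → Bool) {a b : α}
    (hab : σ.SameCycle a b) (hc : c a ≠ c b) (k : Bool) :
    ∃ y, σ.SameCycle a y ∧ c y = k ∧ c (σ y) = !k := by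
  have aux : ∀ p q : α, σ.SameCycle p q → c p = k → c q = !k →
      ∃ y, σ.SameCycle p y ∧ c y = k ∧ c (σ y) = !k := by
    intro p q hpq hp hq
    by_contra! hne
    obtain ⟨n, rfl⟩ := hpq.exists_nat_pow_eq
    have hn : ∀ n : ℕ, c ((σ ^ n) p) = k := by
      intro n
      induction n with
      | zero => exact hp
      | succ n ih =>
        have := hne ((σ ^ n) p) ⟨n, by simp⟩ ih
        rw [pow_succ', Equiv.Perm.mul_apply]
        simpa using this
    rw [hn n] at hq
    simp at hq
  rcases eq_or_eq_not (c a) k with ha | ha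
  · refine aux a b hab ha ?_
    rcases eq_or_eq_not (c b) k with hb | hb
    · exact absurd (ha.trans hb.symm) hc
    · exact hb
  · have hb : c b = k := by
      rcases eq_or_eq_not (c b) k with hb | hb
      · exact hb
      · exact absurd (ha.trans hb.symm) hc
    obtain ⟨y, hy, h⟩ := aux b a hab.symm hb ha
    exact ⟨y, hab.trans hy, h⟩

variable {V E : Type*} {D : EmbeddedDigraph V E}

/-- In an acyclic digraph, no face is bounded by a directed closed walk. -/
theorem exists_sameCycle_snd_ne [Finite E] (h : ∀ u : V, ¬ Relation.TransGen D.Adj u u)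
    (x : E × Bool) : ∃ y, D.faceNext.SameCycle x y ∧ x.2 ≠ y.2 := by
  by_contra! hne
  have hn : ∀ n : ℕ, ((D.faceNext ^ n) x).2 = x.2 := fun n => (hne _ ⟨n, by simp⟩).symm
  have step : ∀ n : ℕ, if x.2 then
      Relation.TransGen D.Adj (D.vert x) (D.vert ((D.faceNext ^ (n + 1)) x)) else
      Relation.TransGen D.Adj (D.vert ((D.faceNext ^ (n + 1)) x)) (D.vert x) := by
    have adj : ∀ y : E × Bool, if y.2 then D.Adj (D.vert y) (D.vert (D.faceNext y)) else
        D.Adj (D.vert (D.faceNext y)) (D.vert y) := by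
      rintro ⟨e, _ | _⟩ <;> rw [vert_faceNext] <;> exact ⟨e, rfl, rfl⟩
    intro n
    induction n with
    | zero =>
      have := adj x
      split_ifs at this ⊢ with hx
      · exact Relation.TransGen.single this
      · exact Relation.TransGen.single this
    | succ n ih =>
      have := adj ((D.faceNext ^ (n + 1)) x)
      rw [hn] at this
      rw [pow_succ', Equiv.Perm.mul_apply]
      split_ifs at this ih ⊢ with hx
      · exact ih.tail this
      · exact Relation.TransGen.head this ih
  have hpos : 0 < orderOf D.faceNext := orderOf_pos _
  have := step (orderOf D.faceNext - 1)
  rw [Nat.sub_add_cancel hpos, pow_orderOf_eq_one, Equiv.Perm.one_apply] at this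
  split_ifs at this
  · exact h _ this
  · exact h _ this

theorem not_isSource_and_isSink (h : ∀ u w, Relation.EqvGen D.Adj u w) (u : V)
    (hs : D.IsSource u) (ht : D.IsSink u) : False := by
  obtain ⟨⟨e, _ | _⟩, hx⟩ := exists_vert_eq h u
  · exact hs e hx
  · exact ht e hx

/-- In a plane embedding of an st-graph, the rotation around a vertex other than the source and the
sink passes from an outgoing edge to an incoming edge only once: the outgoing edges are consecutive,
and so are the incoming ones. -/
theorem eq_of_out_in [Finite V] [Finite E] (hP : D.IsPlane) (hD : D.IsStGraph) {y y' : E × Bool}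
    (hv : D.vert y = D.vert y') (hy : y.2 = true) (hry : (D.rot y).2 = false) (hy' : y'.2 = true)
    (hry' : (D.rot y').2 = false) : y = y' := by
  classical
  by_contra hne
  obtain ⟨hac, ⟨s, hs, hsu⟩, t, ht, htu⟩ := hD
  have hst : s ≠ t := fun h => not_isSource_and_isSink hP.1 s hs (h ▸ ht)
  have hfin : Finite D.Face := Quotient.finite _
  have hF : ∀ p : D.Face × Bool, ∃ x : E × Bool,
      D.toFace x = p.1 ∧ x.2 = p.2 ∧ (D.faceNext x).2 = !p.2 := by
    rintro ⟨f, k⟩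
    induction f using Quotient.inductionOn with
    | _ x =>
      obtain ⟨z, hz, hxz⟩ := exists_sameCycle_snd_ne hac x
      obtain ⟨w, hw, h⟩ := exists_color_change D.faceNext Prod.snd hz hxz k
      exact ⟨w, toFace_eq_iff.2 hw.symm, h⟩
  have hV : ∀ p : {u : V // u ≠ s ∧ u ≠ t} × Bool, ∃ x : E × Bool,
      D.vert x = p.1 ∧ x.2 = p.2 ∧ (D.rot x).2 = !p.2 := by
    rintro ⟨⟨u, hus, hut⟩, k⟩
    have h1 : ∃ e, D.tgt e = u := by
      by_contra! h
      exact hus (hsu u h)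
    have h2 : ∃ e, D.src e = u := by
      by_contra! h
      exact hut (htu u h)
    obtain ⟨e, he⟩ := h1
    obtain ⟨e', he'⟩ := h2
    have hc : D.rot.SameCycle (e, false) (e', true) :=
      (D.sameCycle_rot_iff _ _).2 (he.trans he'.symm)
    obtain ⟨w, hw, h⟩ := exists_color_change D.rot Prod.snd hc (by simp) k
    exact ⟨w, ((D.sameCycle_rot_iff _ _).1 hw).symm.trans he, h⟩
  choose f hf1 hf2 hf3 using hF
  choose g hg1 hg2 hg3 using hV
  obtain ⟨z, hz, hz', hzg⟩ : ∃ z : E × Bool, z.2 = true ∧ (D.rot z).2 = false ∧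
      ∀ p, g p ≠ z := by
    by_contra! hcon
    obtain ⟨p, hp⟩ := hcon y hy hry
    obtain ⟨q, hq⟩ := hcon y' hy' hry'
    apply hne
    rw [← hp, ← hq]
    congr 1
    refine Prod.ext (Subtype.ext ?_) ?_
    · rw [← hg1, ← hg1, hp, hq, hv]
    · rw [← hg2, ← hg2, hp, hq, hy, hy']
  let φ : (D.Face × Bool) ⊕ (Option ({u : V // u ≠ s ∧ u ≠ t} × Bool)) → E × Bool :=
    Sum.elim (fun p => ((f p).1, !(f p).2)) (fun p => p.elim z g)
  have hφ : Function.Injective φ := by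
    have hfg : ∀ p q, ((f p).1, !(f p).2) ≠ (Option.elim q z g : E × Bool) := by
      intro p q h
      have h1 := hf3 p
      have h2 : (Option.elim q z g : E × Bool).2 = !p.2 := by rw [← h, hf2]
      rw [faceNext_apply, h] at h1
      rcases q with _ | q
      · simp only [Option.elim_none] at h1 h2
        rw [hz] at h2
        rw [hz', ← h2] at h1
        simp at h1
      · simp only [Option.elim_some] at h1 h2
        rw [hg2] at h2
        rw [hg3, ← h2] at h1
        simp at h1
    rintro (p | p) (q | q) h
    · have hpq : f p = f q := by
        simp only [φ, Sum.elim_inl, Prod.mk.injEq] at h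
        exact Prod.ext h.1 (by simpa using h.2)
      congr 1
      refine Prod.ext ?_ ?_
      · rw [← hf1, ← hf1, hpq]
      · rw [← hf2, ← hf2, hpq]
    · exact absurd h (hfg p q)
    · exact absurd h.symm (hfg q p)
    · rcases p with _ | p <;> rcases q with _ | q
      · rfl
      · exact absurd h.symm (hzg q)
      · exact absurd h (hzg p)
      · have hpq : g p = g q := h
        congr 2
        refine Prod.ext (Subtype.ext ?_) ?_
        · rw [← hg1, ← hg1, hpq]
        · rw [← hg2, ← hg2, hpq]
  have hcard := Nat.card_le_card_of_injective φ hφ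
  have hVc : Nat.card {u : V // u ≠ s ∧ u ≠ t} + 2 = Nat.card V := by
    have e : {u : V // u ≠ s ∧ u ≠ t} ≃ (({s, t} : Set V)ᶜ : Set V) :=
      Equiv.subtypeEquivRight fun u => by simp
    rw [Nat.card_congr e, Nat.card_coe_set_eq, ← Set.ncard_pair hst, add_comm]
    exact Set.ncard_add_ncard_compl _
  have hE := hP.2
  rw [Nat.card_sum, Finite.card_option, Nat.card_prod, Nat.card_prod, Nat.card_prod,
    Nat.card_eq_fintype_card (α := Bool), Fintype.card_bool] at hcard
  omega

end Bimodal

section Orientation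

variable {V E : Type*} {D : EmbeddedDigraph V E} {v : V} (S : D.Distribution v) (o : Fin 4)

/-- The directions of the boundary edges of the new face for which it has the origin `o` and the
destination `o + 2`. -/
def quadDir (o i : Fin 4) : Bool := decide (i = o ∨ i = o + 1)

theorem Distribution.transGen_expand {dir : Fin 4 → Bool} (rank : Fin 4 → ℕ)
    (hr : ∀ i, rank (if true = dir i then i else i + 1) <
      rank (if false = dir i then i else i + 1))
    {p q : {u : V // u ≠ v} ⊕ Fin 4} (h : Relation.TransGen (expand S dir).Adj p q) :
    Relation.TransGen D.Adj (contract p) (contract q) ∨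
      (contract p = contract q ∧ Sum.elim (fun _ => 0) rank p < Sum.elim (fun _ => 0) rank q) := by
  have step : ∀ p q, (expand S dir).Adj p q → D.Adj (contract p) (contract q) ∨
      (contract p = contract q ∧ Sum.elim (fun _ => 0) rank p < Sum.elim (fun _ => 0) rank q) := by
    rintro _ _ ⟨e | i, rfl, rfl⟩
    · refine Or.inl ⟨e, ?_, ?_⟩
      · exact (S.contract_newVert_oldEnd dir (e, true)).symm
      · exact (S.contract_newVert_oldEnd dir (e, false)).symm
    · exact Or.inr ⟨rfl, hr i⟩
  induction h with
  | single h => exact (step _ _ h).imp Relation.TransGen.single id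
  | tail _ h ih =>
    rcases ih with ih | ⟨ih, ih'⟩ <;> rcases step _ _ h with h | ⟨h, h'⟩
    · exact Or.inl (ih.tail h)
    · exact Or.inl (h ▸ ih)
    · exact Or.inl (ih ▸ Relation.TransGen.single h)
    · exact Or.inr ⟨ih.trans h, ih'.trans h'⟩

theorem Distribution.acyclic_expand (h : ∀ u : V, ¬ Relation.TransGen D.Adj u u)
    (p : {u : V // u ≠ v} ⊕ Fin 4) :
    ¬ Relation.TransGen (expand S (quadDir o)).Adj p p := by
  intro hp
  rcases S.transGen_expand (fun i => if i = o then 0 else if i = o + 2 then 2 else 1)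
    (by clear hp; revert o; decide) hp with hp | ⟨-, hp⟩
  · exact h _ hp
  · exact lt_irrefl _ hp

theorem Distribution.newVert_oldEnd_eq_inl_iff (dir : Fin 4 → Bool) {x : E × Bool}
    {u : {u : V // u ≠ v}} : S.newVert dir (oldEnd x) = Sum.inl u ↔ D.vert x = u := by
  constructor
  · intro h
    rw [← S.contract_newVert_oldEnd dir x, h]
    rfl
  · intro h
    rw [S.newVert_oldEnd dir (h ▸ u.2)]
    simp [h]

theorem Distribution.isSource_inl_iff (dir : Fin 4 → Bool) (u : {u : V // u ≠ v}) :
    (expand S dir).IsSource (Sum.inl u) ↔ D.IsSource u := by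
  constructor
  · exact fun h e he => h (Sum.inl e) ((S.newVert_oldEnd_eq_inl_iff dir (x := (e, false))).2 he)
  · rintro h (e | i) he
    · exact h e ((S.newVert_oldEnd_eq_inl_iff dir (x := (e, false))).1 he)
    · cases he

theorem Distribution.isSink_inl_iff (dir : Fin 4 → Bool) (u : {u : V // u ≠ v}) :
    (expand S dir).IsSink (Sum.inl u) ↔ D.IsSink u := by
  constructor
  · exact fun h e he => h (Sum.inl e) ((S.newVert_oldEnd_eq_inl_iff dir (x := (e, true))).2 he)
  · rintro h (e | i) he
    · exact h e ((S.newVert_oldEnd_eq_inl_iff dir (x := (e, true))).1 he)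
    · cases he

theorem Distribution.isSource_inr_iff (j : Fin 4) :
    (expand S (quadDir o)).IsSource (Sum.inr j) ↔ j = o ∧ ∀ x ∈ S.block o, x.2 = true := by
  constructor
  · intro h
    have hj : j = o := by
      by_contra hne
      have : ∃ l, (if false = quadDir o l then l else l + 1) = j := by
        clear h
        revert o j
        decide
      obtain ⟨l, hl⟩ := this
      exact h (Sum.inr l) (congrArg Sum.inr hl)
    subst hj
    refine ⟨rfl, ?_⟩
    rintro ⟨e, _ | _⟩ hx
    · exact absurd (S.newVert_of_mem_block (quadDir j) hx) (h (Sum.inl e))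
    · rfl
  · rintro ⟨rfl, h⟩ (e | l) he
    · exact absurd (h _ (S.mem_block_of_newVert (quadDir j) (x := (e, false)) he)) (by simp)
    · have he' := Sum.inr.inj he
      clear he h
      revert l j
      decide

theorem Distribution.isSink_inr_iff (j : Fin 4) :
    (expand S (quadDir o)).IsSink (Sum.inr j) ↔
      j = o + 2 ∧ ∀ x ∈ S.block (o + 2), x.2 = false := by
  constructor
  · intro h
    have hj : j = o + 2 := by
      by_contra hne
      have : ∃ l, (if true = quadDir o l then l else l + 1) = j := by
        clear h
        revert o j
        decide
      obtain ⟨l, hl⟩ := this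
      exact h (Sum.inr l) (congrArg Sum.inr hl)
    subst hj
    refine ⟨rfl, ?_⟩
    rintro ⟨e, _ | _⟩ hx
    · rfl
    · exact absurd (S.newVert_of_mem_block (quadDir o) hx) (h (Sum.inl e))
  · rintro ⟨rfl, h⟩ (e | l) he
    · exact absurd (h _ (S.mem_block_of_newVert (quadDir o) (x := (e, true)) he)) (by simp)
    · have he' := Sum.inr.inj he
      clear he h
      revert l o
      decide

theorem Distribution.snd_of_isSource (h : D.IsSource v) {i : Fin 4} {x : E × Bool}
    (hx : x ∈ S.block i) : x.2 = true := by
  obtain ⟨e, _ | _⟩ := x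
  · exact absurd (S.vert_of_mem hx) (h e)
  · rfl

theorem Distribution.snd_of_isSink (h : D.IsSink v) {i : Fin 4} {x : E × Bool}
    (hx : x ∈ S.block i) : x.2 = false := by
  obtain ⟨e, _ | _⟩ := x
  · rfl
  · exact absurd (S.vert_of_mem hx) (h e)

theorem Distribution.isStGraph_expand (hD : D.IsStGraph)
    (hin : D.IsSource v ∨ ∃ x ∈ S.block o, x.2 = false)
    (hout : D.IsSink v ∨ ∃ x ∈ S.block (o + 2), x.2 = true) :
    (expand S (quadDir o)).IsStGraph := by
  obtain ⟨hac, ⟨s, hs, hsu⟩, t, ht, htu⟩ := hD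
  refine ⟨S.acyclic_expand o hac, ?_, ?_⟩
  · rcases hin with hv | ⟨x, hx, hx2⟩
    · refine ⟨Sum.inr o, (S.isSource_inr_iff o o).2 ⟨rfl, fun x => S.snd_of_isSource hv⟩, ?_⟩
      rintro (u | j) h
      · have := hsu u ((S.isSource_inl_iff _ u).1 h)
        exact absurd (this.trans (hsu v hv).symm) u.2
      · rw [((S.isSource_inr_iff o j).1 h).1]
    · have hsv : s ≠ v := by
        rintro rfl
        simp [S.snd_of_isSource hs hx] at hx2
      refine ⟨Sum.inl ⟨s, hsv⟩, (S.isSource_inl_iff _ _).2 hs, ?_⟩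
      rintro (u | j) h
      · exact congrArg Sum.inl (Subtype.ext (hsu u ((S.isSource_inl_iff _ u).1 h)))
      · simp [((S.isSource_inr_iff o j).1 h).2 x hx] at hx2
  · rcases hout with hv | ⟨x, hx, hx2⟩
    · refine ⟨Sum.inr (o + 2), (S.isSink_inr_iff o _).2 ⟨rfl, fun x => S.snd_of_isSink hv⟩, ?_⟩
      rintro (u | j) h
      · have := htu u ((S.isSink_inl_iff _ u).1 h)
        exact absurd (this.trans (htu v hv).symm) u.2
      · rw [((S.isSink_inr_iff o j).1 h).1]
    · have htv : t ≠ v := by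
        rintro rfl
        simp [S.snd_of_isSink ht hx] at hx2
      refine ⟨Sum.inl ⟨t, htv⟩, (S.isSink_inl_iff _ _).2 ht, ?_⟩
      rintro (u | j) h
      · exact congrArg Sum.inl (Subtype.ext (htu u ((S.isSink_inl_iff _ u).1 h)))
      · simp [((S.isSink_inr_iff o j).1 h).2 x hx] at hx2

theorem Distribution.isFaceBoundedBy_expand :
    (expand S (quadDir o)).IsFaceBoundedBy (Sum.inr o) (Sum.inr (o + 2))
      [Sum.inr o, Sum.inr (o + 1)] [Sum.inr (o - 1), Sum.inr (o - 2)] := by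
  have hs : ∀ i, (expand S (quadDir o)).src (Sum.inr i) =
    Sum.inr (if true = quadDir o i then i else i + 1) := fun _ => rfl
  have ht : ∀ i, (expand S (quadDir o)).tgt (Sum.inr i) =
    Sum.inr (if false = quadDir o i then i else i + 1) := fun _ => rfl
  have hf : ∀ i j k l, k = (!quadDir o i) → j = i - 1 → l = (!quadDir o (i - 1)) →
      (expand S (quadDir o)).faceNext (Sum.inr i, k) = (Sum.inr j, l) := by
    rintro i _ _ _ rfl rfl rfl
    exact S.faceNext_inr_tail _ i
  refine ⟨?_, ?_, ?_, ?_⟩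
  · simp only [IsDirectedWalk, hs, ht, Sum.inr.injEq]
    clear hs ht hf
    revert o
    decide
  · simp only [IsDirectedWalk, hs, ht, Sum.inr.injEq]
    clear hs ht hf
    revert o
    decide
  · have h1 : o - 1 ≠ o - 2 := by clear hs ht hf; revert o; decide
    simp [h1]
  · simp only [List.map_cons, List.map_nil, List.reverse_cons, List.reverse_nil, List.nil_append,
      List.cons_append, Cycle.chain_coe_cons, List.isChain_cons_cons, List.isChain_singleton,
      and_true]
    refine ⟨?_, ?_, ?_, ?_⟩ <;> apply hf <;> clear hs ht hf <;> revert o <;> decide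

theorem Distribution.isPlaneStGraph_expand [Finite V] [Finite E] (dir : Fin 4 → Bool)
    (hD : D.IsPlaneStGraph) (hst : (expand S dir).IsStGraph)
    (hinr : ∀ j, (expand S dir).IsSource (Sum.inr j) ∨ (expand S dir).IsSink (Sum.inr j) →
      (expand S dir).OnOuterFace (Sum.inr j)) :
    (expand S dir).IsPlaneStGraph := by
  refine ⟨S.isPlane_expand dir hD.1, hst, ?_⟩
  rintro (u | j) h
  · rw [S.isSource_inl_iff, S.isSink_inl_iff] at h
    exact S.onOuterFace_inl dir (hD.2.2 u h)
  · exact hinr j h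

/-- If every vertex of the new face receives an edge, then some pair of opposite ones receives an
incoming edge and an outgoing edge, respectively. -/
theorem Distribution.exists_in_out [Finite V] [Finite E] (hP : D.IsPlane) (hD : D.IsStGraph)
    (hs : ¬ D.IsSource v) (ht : ¬ D.IsSink v) (hS : ∀ i, S.block i ≠ []) :
    ∃ o, (∃ x ∈ S.block o, x.2 = false) ∧ ∃ x ∈ S.block (o + 2), x.2 = true := by
  by_contra! hne
  have hmem : ∀ i, ∃ x, x ∈ S.block i := fun i => List.exists_mem_of_ne_nil _ (hS i)
  have hpair : ∀ i, (∀ x ∈ S.block i, x.2 = true) ∧ (∀ x ∈ S.block (i + 2), x.2 = true) ∨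
      (∀ x ∈ S.block i, x.2 = false) ∧ (∀ x ∈ S.block (i + 2), x.2 = false) := by
    intro i
    have h1 := hne i
    have h2 := hne (i + 2)
    have e : i + 2 + 2 = i := by rw [add_assoc]; exact add_zero i
    rw [e] at h2
    obtain ⟨x, hx⟩ := hmem i
    obtain ⟨y, hy⟩ := hmem (i + 2)
    grind
  have hrot : ∀ i, (∀ x ∈ S.block i, x.2 = true) → (∀ x ∈ S.block (i + 1), x.2 = false) →
      ∃ x ∈ S.block i, x.2 = true ∧ (D.rot x).2 = false := by
    intro i h h'
    obtain ⟨l, a, ha⟩ := (List.eq_nil_or_concat (S.block i)).resolve_left (hS i)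
    rw [List.concat_eq_append] at ha
    obtain ⟨b, l', hb⟩ := List.exists_cons_of_ne_nil (hS (i + 1))
    have hr := S.rot_last_of_block ha
    simp only [Distribution.blocksFrom, hb, List.cons_append, List.head?_cons,
      Option.some.injEq] at hr
    have hm : a ∈ S.block i := by simp [ha]
    exact ⟨a, hm, h a hm, hr ▸ h' b (by simp [hb])⟩
  have hcon : ∀ i, (∀ x ∈ S.block i, x.2 = true) → (∀ x ∈ S.block (i + 2), x.2 = true) →
      (∀ x ∈ S.block (i + 1), x.2 = false) → (∀ x ∈ S.block (i + 2 + 1), x.2 = false) →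
      False := by
    intro i h0 h2 h1 h3
    obtain ⟨x, hx, hx2, hrx⟩ := hrot i h0 h1
    obtain ⟨y, hy, hy2, hry⟩ := hrot (i + 2) h2 h3
    have := eq_of_out_in hP hD ((S.vert_of_mem hx).trans (S.vert_of_mem hy).symm) hx2 hrx hy2 hry
    subst this
    have := S.eq_of_mem_of_mem hx hy
    simp at this
  have hall : ∀ k : Bool, ¬ ∀ i, ∀ x ∈ S.block i, x.2 = k := by
    rintro (_ | _) h
    · refine ht fun e he => ?_
      obtain ⟨i, hi⟩ := S.exists_mem_block (x := (e, true)) he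
      simpa using h i _ hi
    · refine hs fun e he => ?_
      obtain ⟨i, hi⟩ := S.exists_mem_block (x := (e, false)) he
      simpa using h i _ hi
  rcases hpair 0 with ⟨h0, h2⟩ | ⟨h0, h2⟩ <;> rcases hpair 1 with ⟨h1, h3⟩ | ⟨h1, h3⟩
  · refine hall true fun i => ?_
    fin_cases i
    exacts [h0, h1, h2, h3]
  · exact hcon 0 h0 h2 h1 h3
  · exact hcon 1 h1 h3 h2 h0
  · refine hall false fun i => ?_
    fin_cases i
    exacts [h0, h1, h2, h3]

end Orientation

end EmbeddedDigraph

/-- Expansion of a vertex `v` of a plane st-graph `D` into a quadrilateral face. The vertices of the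
new face are `Sum.inr 0, Sum.inr 1, Sum.inr 2, Sum.inr 3` in clockwise order. If `v` is neither the
source nor the sink, then each of them receives at least one of the edges formerly at `v`. -/
theorem expand_vertex_of_plane_st_digraph {V E : Type*} [Finite V] [Finite E]
    (D : EmbeddedDigraph V E) (hD : D.IsPlaneStGraph) (v : V) (S : D.Distribution v)
    (hS : ¬ D.IsSource v → ¬ D.IsSink v → ∀ i : Fin 4, S.block i ≠ []) :
    ∃ dir : Fin 4 → Bool,
      -- (I1) a single source and a single sink
      ((∃! s, (EmbeddedDigraph.expand S dir).IsSource s) ∧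
        (∃! t, (EmbeddedDigraph.expand S dir).IsSink t)) ∧
      -- (I2) the new face is bounded by two directed paths of length two from one of its vertices
      -- to the opposite one
      (∃ o : Fin 4, (EmbeddedDigraph.expand S dir).IsFaceBoundedBy (Sum.inr o) (Sum.inr (o + 2))
        [Sum.inr o, Sum.inr (o + 1)] [Sum.inr (o - 1), Sum.inr (o - 2)]) ∧
      -- the result is a plane embedding of an st-graph
      (EmbeddedDigraph.expand S dir).IsPlane ∧ (EmbeddedDigraph.expand S dir).IsStGraph ∧
      -- and a plane st-graph if all four vertices have received an edge (so in particular if `v` is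
      -- neither the source nor the sink), or if some vertex of the new face that
      -- lies on the outer face is opposite to one that has received an edge
      ((∀ i : Fin 4, S.block i ≠ []) ∨
          (∃ i : Fin 4, S.CornerOnOuterFace i ∧ S.block (i + 2) ≠ []) →
        (EmbeddedDigraph.expand S dir).IsPlaneStGraph) := by
  obtain ⟨hP, hst, hout⟩ := hD
  obtain ⟨x₀, hx₀⟩ := EmbeddedDigraph.exists_vert_eq hP.1 v
  have hopp : ∀ i : Fin 4, i + 2 + 2 = i := by decide
  suffices ∃ o : Fin 4, (EmbeddedDigraph.expand S (EmbeddedDigraph.quadDir o)).IsStGraph ∧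
      ((∀ i : Fin 4, S.block i ≠ []) ∨
          (∃ i : Fin 4, S.CornerOnOuterFace i ∧ S.block (i + 2) ≠ []) →
        ∀ j, (EmbeddedDigraph.expand S (EmbeddedDigraph.quadDir o)).IsSource (Sum.inr j) ∨
          (EmbeddedDigraph.expand S (EmbeddedDigraph.quadDir o)).IsSink (Sum.inr j) →
          (EmbeddedDigraph.expand S (EmbeddedDigraph.quadDir o)).OnOuterFace (Sum.inr j)) by
    obtain ⟨o, h, h'⟩ := this
    exact ⟨EmbeddedDigraph.quadDir o, h.2, ⟨o, S.isFaceBoundedBy_expand o⟩,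
      S.isPlane_expand _ hP, h,
      fun hc => S.isPlaneStGraph_expand _ ⟨hP, hst, hout⟩ h (h' hc)⟩
  have hpick : (D.IsSource v ∨ D.IsSink v) → ∃ i : Fin 4, S.block (i + 2) ≠ [] ∧
      ((∀ i : Fin 4, S.block i ≠ []) ∨
        (∃ i : Fin 4, S.CornerOnOuterFace i ∧ S.block (i + 2) ≠ []) →
        S.CornerOnOuterFace i) := by
    intro hv
    by_cases hc : ∃ i : Fin 4, S.CornerOnOuterFace i ∧ S.block (i + 2) ≠ []
    · obtain ⟨i, hi, hi'⟩ := hc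
      exact ⟨i, hi', fun _ => hi⟩
    · obtain ⟨j, hj⟩ := S.exists_mem_block hx₀
      refine ⟨j + 2, by rw [hopp]; exact List.ne_nil_of_mem hj, ?_⟩
      rintro (h | h)
      · obtain ⟨i, hi⟩ := S.exists_cornerOnOuterFace (hout v hv)
        exact absurd ⟨i, hi, h _⟩ hc
      · exact absurd h hc
  by_cases hs : D.IsSource v
  · obtain ⟨o, ho, hO⟩ := hpick (Or.inl hs)
    obtain ⟨x, hx⟩ := List.exists_mem_of_ne_nil _ ho
    have hx2 := S.snd_of_isSource hs hx
    refine ⟨o, S.isStGraph_expand o hst (Or.inl hs) (Or.inr ⟨x, hx, hx2⟩), ?_⟩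
    rintro hc j (h | h)
    · rw [((S.isSource_inr_iff o j).1 h).1]
      exact S.onOuterFace_inr_of_corner _ hx₀ (hO hc)
    · simp [((S.isSink_inr_iff o j).1 h).2 x hx] at hx2
  by_cases ht : D.IsSink v
  · obtain ⟨i, hi, hO⟩ := hpick (Or.inr ht)
    obtain ⟨x, hx⟩ := List.exists_mem_of_ne_nil _ hi
    have hx2 := S.snd_of_isSink ht hx
    refine ⟨i + 2, S.isStGraph_expand (i + 2) hst (Or.inr ⟨x, hx, hx2⟩) (Or.inl ht), ?_⟩
    rintro hc j (h | h)
    · simp [((S.isSource_inr_iff _ j).1 h).2 x hx] at hx2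
    · rw [((S.isSink_inr_iff _ j).1 h).1, hopp]
      exact S.onOuterFace_inr_of_corner _ hx₀ (hO hc)
  · obtain ⟨o, ⟨x, hx, hx2⟩, y, hy, hy2⟩ := S.exists_in_out hP hst hs ht (hS hs ht)
    refine ⟨o, S.isStGraph_expand o hst (Or.inr ⟨x, hx, hx2⟩) (Or.inr ⟨y, hy, hy2⟩), ?_⟩
    rintro - j (h | h)
    · simp [((S.isSource_inr_iff o j).1 h).2 x hx] at hx2
    · simp [((S.isSink_inr_iff o j).1 h).2 y hy] at hy2
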